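/- In the cycle-plus-tree setting, suppose G is periodic and deg(v_1)=…=deg(v_t)=2, deg(w_1)=…=deg(w_t)=2. Then deg(v_{t+1}) = deg(w_{t+1}) and this common degree is 1 or 2. -/

import Mathlib

open Matrix

attribute [local instance] Classical.propDecidable

namespace GroverPaper

variable {V : Type*}

/-- The arc set of a simple graph: ordered pairs of adjacent vertices. -/
abbrev Arc (G : SimpleGraph V) : Type _ := {p : V × V // G.Adj p.1 p.2}

/-- The time evolution matrix of the Grover walk on a graph `G`. -/
noncomputable def groverU [Fintype V] (G : SimpleGraph V) :
    Matrix (Arc G) (Arc G) ℂ := fun e f =>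
  if f.val.2 = e.val.1 then
    if e.val = (f.val.2, f.val.1) then 2 / (G.degree f.val.2 : ℂ) - 1
    else 2 / (G.degree f.val.2 : ℂ)
  else 0

/-- A graph is periodic if some positive power of its Grover evolution is the identity. -/
def IsPeriodic [Fintype V] (G : SimpleGraph V) : Prop :=
  ∃ k : ℕ, 0 < k ∧ groverU G ^ k = 1

/-- The period of a periodic graph: the least positive `k` with `U^k = 1`. -/
noncomputable def period [Fintype V] (G : SimpleGraph V) : ℕ :=
  sInf {k : ℕ | 0 < k ∧ groverU G ^ k = 1}

/-- A graph is `k`-periodic if it is periodic with period `k`. -/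
def IsKPeriodic [Fintype V] (G : SimpleGraph V) (k : ℕ) : Prop :=
  IsPeriodic G ∧ period G = k

/-- A graph is odd-periodic if it is periodic with odd period. -/
def IsOddPeriodic [Fintype V] (G : SimpleGraph V) : Prop :=
  IsPeriodic G ∧ Odd (period G)

/-- The transition matrix of the isotropic random walk on `G`. -/
noncomputable def transition [Fintype V] (G : SimpleGraph V) :
    Matrix V V ℝ := fun u v =>
  if G.Adj u v then 1 / (G.degree u : ℝ) else 0

/-- The weight with which the walk with weights `M` started at `a` first reaches `u` after `n`
steps. -/
noncomputable def hit {R : Type*} [CommRing R] [Fintype V] (M : Matrix V V R) (u : V) :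
    ℕ → V → R
  | 0 => fun a => if a = u then 1 else 0
  | n + 1 => fun a => if a = u then 0 else ∑ b, M a b * hit M u n b

/-- The weight with which the walk with weights `M` started at `u` first returns to `u` after `n`
steps. -/
noncomputable def firstReturn {R : Type*} [CommRing R] [Fintype V] (M : Matrix V V R) (u : V) :
    ℕ → R
  | 0 => 0
  | n + 1 => ∑ b, M u b * hit M u n b

section Determinants

variable {R : Type*} [CommRing R]

/-- The matrix `1 - X M` over power series. -/
noncomputable def oneSubX (M : Matrix V V R) : Matrix V V (PowerSeries R) :=
  1 - (PowerSeries.X : PowerSeries R) • M.map (PowerSeries.C (R := R))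

lemma oneSubX_apply (M : Matrix V V R) (a b : V) :
    oneSubX M a b = (if a = b then 1 else 0) - PowerSeries.X * PowerSeries.C (M a b) := by
  simp [oneSubX, Matrix.one_apply]

variable [Fintype V]

/-- The determinant of `1 - X M` with the row and column of `u` removed. -/
noncomputable def minorSeries (M : Matrix V V R) (u : V) : PowerSeries R :=
  ((oneSubX M).updateRow u (Pi.single u 1)).det

lemma oneSubX_mulVec_hit (M : Matrix V V R) (u : V) :
    oneSubX M *ᵥ (fun a => PowerSeries.mk fun n => hit M u n a) =
      Pi.single u (1 - PowerSeries.mk (firstReturn M u)) := by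
  ext a n
  have h1 : (oneSubX M *ᵥ (fun a => PowerSeries.mk fun n => hit M u n a)) a =
      (PowerSeries.mk fun n => hit M u n a) - PowerSeries.X *
        ∑ b, PowerSeries.C (M a b) * (PowerSeries.mk fun n => hit M u n b) := by
    simp [Matrix.mulVec, dotProduct, oneSubX_apply, sub_mul, Finset.sum_sub_distrib,
      Finset.mul_sum, mul_assoc]
  rw [h1]
  cases n with
  | zero =>
    by_cases ha : a = u
    · subst ha; simp [hit, firstReturn]
    · simp [hit, ha]
  | succ n =>
    by_cases ha : a = u
    · subst ha
      simp [hit, firstReturn, PowerSeries.coeff_succ_X_mul, PowerSeries.coeff_one]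
    · simp [hit, ha, PowerSeries.coeff_succ_X_mul]

lemma det_oneSubX (M : Matrix V V R) (u : V) :
    (oneSubX M).det = minorSeries M u * (1 - PowerSeries.mk (firstReturn M u)) := by
  have h := congrFun (congrArg ((oneSubX M).adjugate *ᵥ ·) (oneSubX_mulVec_hit M u)) u
  have hu : (PowerSeries.mk fun n => hit M u n u) = 1 := by
    ext n
    cases n <;> simp [hit, PowerSeries.coeff_one]
  simpa [Matrix.mulVec_mulVec, Matrix.adjugate_mul, Matrix.smul_mulVec, hu,
    Matrix.adjugate_apply, minorSeries] using h

lemma coeff_zero_minorSeries (M : Matrix V V R) (u : V) :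
    PowerSeries.coeff 0 (minorSeries M u) = 1 := by
  have : ((oneSubX M).updateRow u (Pi.single u 1)).map
      (PowerSeries.constantCoeff (R := R)) = 1 := by
    ext a b
    by_cases ha : a = u
    · subst ha
      by_cases hb : a = b
      · subst hb; simp
      · simp [hb, Ne.symm hb]
    · rw [Matrix.map_apply, Matrix.updateRow_ne ha, oneSubX_apply]
      by_cases hb : a = b <;> simp [Matrix.one_apply, hb]
  rw [PowerSeries.coeff_zero_eq_constantCoeff_apply, minorSeries, RingHom.map_det]
  simp [RingHom.mapMatrix_apply, this]

/-- If the graph of `M` minus `u` is bipartite, with parts recorded by the signs `s`, then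
`minorSeries M u` is even. -/
lemma evalNegHom_minorSeries (M : Matrix V V R) (u : V) (s : V → R) (hs : ∀ a, s a * s a = 1)
    (hM : ∀ a b, a ≠ u → b ≠ u → s a * s b * M a b = -M a b) :
    PowerSeries.evalNegHom (minorSeries M u) = minorSeries M u := by
  set B := (oneSubX M).updateRow u (Pi.single u 1) with hB
  set N : Matrix V V (PowerSeries R) :=
    .of fun a b => PowerSeries.C (s b) * (PowerSeries.C (s a) * B a b) with hN
  have hNdet : N.det = B.det := by
    have h1 := Matrix.det_mul_row (fun b => PowerSeries.C (s b))
      (.of fun a b => PowerSeries.C (s a) * B a b)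
    have h2 := Matrix.det_mul_column (fun a => PowerSeries.C (s a)) B
    simp only [Matrix.of_apply] at h1
    rw [hN, h1, h2, ← mul_assoc, ← Finset.prod_mul_distrib]
    simp [← map_mul, hs]
  have hBu : ∀ j, B u j = if j = u then 1 else 0 := by
    intro j; simp [hB, Pi.single_apply]
  have hBa : ∀ i j, i ≠ u → B i j =
      (if i = j then 1 else 0) - PowerSeries.X * PowerSeries.C (M i j) := by
    intro i j hi; simp [hB, Matrix.updateRow_ne hi, oneSubX_apply]
  have hX : PowerSeries.evalNegHom (PowerSeries.X : PowerSeries R) = -PowerSeries.X :=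
    PowerSeries.evalNegHom_X
  have hC : ∀ r : R, PowerSeries.evalNegHom (PowerSeries.C r) = PowerSeries.C r := by
    intro r
    ext n
    cases n <;> simp [PowerSeries.evalNegHom, PowerSeries.coeff_rescale, PowerSeries.coeff_C]
  rw [minorSeries, RingHom.map_det, ← hB, ← hNdet]
  refine Matrix.det_eq_of_forall_row_eq_smul_add_const
    (fun i => if i = u then 0 else PowerSeries.evalNegHom (B i u) - N i u) u (by simp) ?_
  intro i j
  have hCs : ∀ a, PowerSeries.C (s a) * PowerSeries.C (s a) = 1 := by
    intro a; rw [← map_mul, hs, map_one]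
  have hNu : ∀ j, N u j = if j = u then 1 else 0 := by
    intro j
    by_cases hj : j = u
    · subst hj; simp [hN, hBu, hCs]
    · simp [hN, hBu, hj]
  rw [hNu]
  by_cases hi : i = u
  · subst hi
    rw [hNu]
    by_cases hj : j = i <;> simp [hBu, hj]
  by_cases hj : j = u
  · subst hj; simp [hi]
  · have := congrArg (PowerSeries.C (R := R)) (hM i j hi hj)
    simp only [map_mul, map_neg] at this
    by_cases hij : i = j
    · subst hij
      simp [hBa _ _ hi, hN, hj, hX, hC]
      linear_combination PowerSeries.X * this - hCs i
    · simp [hBa _ _ hi, hN, hj, hX, hC, hij]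
      linear_combination PowerSeries.X * this

/-- An integrality argument for a factorization `Φ = A (1 - F)` of power series with `A` even,
`Φ` integral, and the odd part of `F` integral with leading term `X ^ k`. -/
lemma coeff_mem_of_eq_mul_one_sub {S : Subring R} {Φ A : PowerSeries R} {f : ℕ → R} {k : ℕ}
    (hk : Odd k) (hΦA : Φ = A * (1 - PowerSeries.mk f)) (hΦ : ∀ n, PowerSeries.coeff n Φ ∈ S)
    (hA : ∀ n, Odd n → PowerSeries.coeff n A = 0) (hA0 : PowerSeries.coeff 0 A = 1)
    (hf : ∀ n, Odd n → f n ∈ S) (hflt : ∀ n, Odd n → n < k → f n = 0) (hfk : f k = 1) (n : ℕ) :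
    f n ∈ S := by
  have key : ∀ n, PowerSeries.coeff n Φ = PowerSeries.coeff n A -
      ∑ p ∈ Finset.HasAntidiagonal.antidiagonal n, PowerSeries.coeff p.1 A * f p.2 := by
    intro n
    rw [hΦA, mul_sub, mul_one, map_sub, PowerSeries.coeff_mul]
    simp
  have hAS : ∀ n, PowerSeries.coeff n A ∈ S := by
    intro n
    induction n using Nat.strong_induction_on with
    | _ n ih =>
    rcases Nat.even_or_odd n with hn | hn
    · have h := key (n + k)
      have hodd : Odd (n + k) := hn.add_odd hk
      rw [hA _ hodd, zero_sub] at h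
      have hmem : ((n, k) : ℕ × ℕ) ∈ Finset.HasAntidiagonal.antidiagonal (n + k) := by simp
      rw [← Finset.add_sum_erase _ _ hmem] at h
      simp only [hfk, mul_one] at h
      have : PowerSeries.coeff n A = -PowerSeries.coeff (n + k) Φ -
          ∑ p ∈ (Finset.HasAntidiagonal.antidiagonal (n + k)).erase (n, k),
            PowerSeries.coeff p.1 A * f p.2 := by
        rw [h]; ring
      rw [this]
      refine S.sub_mem (S.neg_mem (hΦ _)) (S.sum_mem ?_)
      rintro ⟨i, j⟩ hij
      simp only [Finset.mem_erase, Finset.HasAntidiagonal.mem_antidiagonal, ne_eq, Prod.mk.injEq] at hij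
      rcases Nat.even_or_odd i with hi | hi
      · have hj : Odd j := by
          rw [← hij.2] at hodd
          exact (Nat.odd_add.mp hodd |>.not.mp (by simpa using hi) |> Nat.not_even_iff_odd.mp)
        by_cases hjk : j < k
        · simp [hflt j hj hjk, S.zero_mem]
        · exact S.mul_mem (ih i (by omega)) (hf j hj)
      · simp [hA i hi, S.zero_mem]
    · simp [hA n hn, S.zero_mem]
  induction n using Nat.strong_induction_on with
  | _ n ih =>
  have h := key n
  have hmem : ((0, n) : ℕ × ℕ) ∈ Finset.HasAntidiagonal.antidiagonal n := by simp
  rw [← Finset.add_sum_erase _ _ hmem] at h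
  simp only [hA0, one_mul] at h
  have : f n = PowerSeries.coeff n A - PowerSeries.coeff n Φ -
      ∑ p ∈ (Finset.HasAntidiagonal.antidiagonal n).erase (0, n), PowerSeries.coeff p.1 A * f p.2 := by
    rw [h]; ring
  rw [this]
  refine S.sub_mem (S.sub_mem (hAS n) (hΦ n)) (S.sum_mem ?_)
  rintro ⟨i, j⟩ hij
  simp only [Finset.mem_erase, Finset.HasAntidiagonal.mem_antidiagonal, ne_eq, Prod.mk.injEq] at hij
  exact S.mul_mem (hAS i) (ih j (by omega))

end Determinants

section Periodic

variable [Fintype V]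

/-- Twice the transition matrix of the isotropic random walk, with complex entries. -/
noncomputable def walkMatrix (G : SimpleGraph V) : Matrix V V ℂ := fun a b =>
  if G.Adj a b then 2 / (G.degree a : ℂ) else 0

lemma walkMatrix_sum (G : SimpleGraph V) (h : V → ℂ) (a : V) :
    ∑ b, walkMatrix G a b * h b = 2 / (G.degree a : ℂ) * ∑ b ∈ G.neighborFinset a, h b := by
  rw [SimpleGraph.neighborFinset_eq_filter, Finset.sum_filter, Finset.mul_sum]
  refine Finset.sum_congr rfl fun b _ => ?_
  by_cases hb : G.Adj a b <;> simp [walkMatrix, hb]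

lemma groverU_mulVec (G : SimpleGraph V) (ψ : V → V → ℂ) (e : Arc G) :
    (groverU G *ᵥ fun f => ψ f.1.1 f.1.2) e =
      2 / (G.degree e.1.1 : ℂ) * ∑ b ∈ G.neighborFinset e.1.1, ψ b e.1.1 - ψ e.1.2 e.1.1 := by
  obtain ⟨⟨a, a'⟩, he⟩ := e
  simp only at he ⊢
  have h1 : ∀ f : Arc G, groverU G ⟨(a, a'), he⟩ f * ψ f.1.1 f.1.2 =
      (fun p : V × V => (if p.2 = a then 2 / (G.degree a : ℂ) * ψ p.1 a else 0) -
        if p = (a', a) then ψ a' a else 0) f.1 := by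
    rintro ⟨⟨x, y⟩, hf⟩
    simp only [groverU]
    by_cases hy : y = a
    · subst hy
      by_cases hx : x = a'
      · subst hx; simp [sub_mul]
      · simp [hx, Ne.symm hx]
    · simp [hy]
  have h2 : ∀ g : V × V → ℂ, ∑ f : Arc G, g f.1 =
      ∑ x, ∑ y, if G.Adj x y then g (x, y) else 0 := by
    intro g
    rw [← Finset.sum_product', ← Finset.sum_filter]
    exact (Finset.sum_subtype _ (by simp) g).symm
  rw [Matrix.mulVec, dotProduct, Finset.sum_congr rfl fun f _ => h1 f, h2 (fun p : V × V =>
    (if p.2 = a then 2 / (G.degree a : ℂ) * ψ p.1 a else 0) -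
      if p = (a', a) then ψ a' a else 0)]
  have h3 : ∀ x y, (if G.Adj x y then ((if y = a then 2 / (G.degree a : ℂ) * ψ x a else 0) -
      if (x, y) = (a', a) then ψ a' a else 0) else 0) =
      (if y = a then (if G.Adj a x then 2 / (G.degree a : ℂ) * ψ x a else 0) else 0) -
      (if y = a then (if x = a' then ψ a' a else 0) else 0) := by
    intro x y
    by_cases hy : y = a
    · subst hy
      by_cases hx : x = a'
      · subst hx; simp [he, he.symm]
      · simp [hx, G.adj_comm x y]
    · simp [hy]
  simp only [h3, Finset.sum_sub_distrib, Finset.sum_ite_eq', Finset.mem_univ, if_true]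
  rw [← Finset.sum_filter, ← SimpleGraph.neighborFinset_eq_filter, ← Finset.mul_sum]

lemma isIntegral_of_walkMatrix_mulVec {G : SimpleGraph V} (hdeg : ∀ a, ∃ b, G.Adj a b)
    (hper : IsPeriodic G) {l : ℂ} {y : V → ℂ} (hy : y ≠ 0) (hl : walkMatrix G *ᵥ y = l • y) :
    IsIntegral ℤ l := by
  obtain ⟨K, hK, hUK⟩ := hper
  set U := groverU G with hU
  have hroot : ∀ (x : ℂ) (W : Arc G → ℂ), W ≠ 0 → U *ᵥ W = x • W → x ^ K = 1 := by
    intro x W hW hx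
    have hpow : ∀ n : ℕ, (U ^ n) *ᵥ W = x ^ n • W := by
      intro n
      induction n with
      | zero => simp
      | succ n ih =>
        rw [pow_succ, ← Matrix.mulVec_mulVec, hx, Matrix.mulVec_smul, ih, smul_smul, pow_succ,
          mul_comm]
    have h := hpow K
    rw [hUK, Matrix.one_mulVec] at h
    obtain ⟨e, he⟩ := Function.ne_iff.mp hW
    have := congrFun h e
    simp only [Pi.smul_apply, smul_eq_mul] at this
    exact mul_right_cancel₀ he (by rw [one_mul]; exact this.symm)
  set R : Arc G → ℂ := fun f => y f.1.2 with hR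
  set L : Arc G → ℂ := fun f => y f.1.1 with hL
  have hUR : U *ᵥ R = L := by
    ext e
    rw [hU, hR, groverU_mulVec G (fun _ b => y b) e]
    have : (G.degree e.1.1 : ℂ) ≠ 0 := by
      exact_mod_cast (SimpleGraph.Adj.degree_pos_left e.2).ne'
    simp only [Finset.sum_const, SimpleGraph.card_neighborFinset_eq_degree, hL, nsmul_eq_mul]
    field_simp
    ring
  have hUL : U *ᵥ L = l • L - R := by
    ext e
    rw [hU, hL, groverU_mulVec G (fun a _ => y a) e, ← walkMatrix_sum]
    have := congrFun hl e.1.1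
    simp only [Matrix.mulVec, dotProduct] at this
    rw [this]
    simp [hR]
  have hR0 : R ≠ 0 := by
    obtain ⟨a, ha⟩ := Function.ne_iff.mp hy
    obtain ⟨b, hb⟩ := hdeg a
    exact Function.ne_iff.mpr ⟨⟨(b, a), hb.symm⟩, ha⟩
  obtain ⟨x, hx⟩ := IsAlgClosed.exists_root (Polynomial.X ^ 2 - Polynomial.C l * Polynomial.X + 1)
    (by
      have : (Polynomial.X ^ 2 - Polynomial.C l * Polynomial.X + 1 : Polynomial ℂ).degree = 2 := by
        compute_degree!
      rw [this]; decide)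
  have hx' : x * (l - x) = 1 := by
    simp [Polynomial.IsRoot] at hx
    linear_combination -hx
  have hint : ∀ z : ℂ, z ^ K = 1 → IsIntegral ℤ z := fun z hz =>
    IsIntegral.of_pow hK (hz ▸ isIntegral_one)
  have hxK : x ^ K = 1 := by
    by_cases hW : L - (l - x) • R = 0
    · have h1 := hroot (l - x) R hR0 (by rw [hUR]; exact sub_eq_zero.mp hW)
      calc x ^ K = x ^ K * (l - x) ^ K := by rw [h1, mul_one]
        _ = 1 := by rw [← mul_pow, hx', one_pow]
    · refine hroot x _ hW ?_
      rw [Matrix.mulVec_sub, Matrix.mulVec_smul, hUR, hUL]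
      ext e
      simp only [Pi.sub_apply, Pi.smul_apply, smul_eq_mul]
      linear_combination R e * hx'
  have hlx : (l - x) ^ K = 1 := by
    calc (l - x) ^ K = x ^ K * (l - x) ^ K := by rw [hxK, one_mul]
      _ = 1 := by rw [← mul_pow, hx', one_pow]
  simpa using (hint x hxK).add (hint (l - x) hlx)

lemma coeff_prod_X_sub_C_mem (S : Subring ℂ) (s : Multiset ℂ) (hs : ∀ r ∈ s, r ∈ S) (n : ℕ) :
    (s.map fun r => Polynomial.X - Polynomial.C r).prod.coeff n ∈ S := by
  induction s using Multiset.induction_on generalizing n with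
  | empty =>
    simp only [Multiset.map_zero, Multiset.prod_zero, Polynomial.coeff_one]
    split_ifs
    exacts [S.one_mem, S.zero_mem]
  | cons r s ih =>
    have ih := ih fun q hq => hs q (Multiset.mem_cons_of_mem hq)
    rw [Multiset.map_cons, Multiset.prod_cons, sub_mul]
    cases n with
    | zero =>
      simpa using S.mul_mem (hs r (Multiset.mem_cons_self r s)) (ih 0)
    | succ n =>
      simpa using S.sub_mem (ih n) (S.mul_mem (hs r (Multiset.mem_cons_self r s)) (ih (n + 1)))

lemma coeff_det_oneSubX_walkMatrix_mem {G : SimpleGraph V} (hdeg : ∀ a, ∃ b, G.Adj a b)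
    (hper : IsPeriodic G) (n : ℕ) :
    PowerSeries.coeff n (oneSubX (walkMatrix G)).det ∈ (integralClosure ℤ ℂ).toSubring := by
  have h1 : (oneSubX (walkMatrix G)).det = ((walkMatrix G).charpolyRev : PowerSeries ℂ) := by
    rw [← Polynomial.coeToPowerSeries.ringHom_apply, Matrix.charpolyRev, RingHom.map_det]
    congr 1
    ext a b : 1
    simp [oneSubX_apply, Matrix.one_apply, apply_ite (Polynomial.toPowerSeries)]
    exact mul_comm _ _
  rw [h1, Polynomial.coeff_coe, ← Matrix.reverse_charpoly, Polynomial.coeff_reverse,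
    (IsAlgClosed.splits (walkMatrix G).charpoly).eq_prod_roots_of_monic
      (Matrix.charpoly_monic _)]
  refine coeff_prod_X_sub_C_mem _ _ ?_ _
  intro l hl
  have hroot : (walkMatrix G).charpoly.eval l = 0 := (Polynomial.mem_roots'.mp hl).2
  rw [Matrix.eval_charpoly] at hroot
  obtain ⟨y, hy, hyl⟩ := Matrix.exists_mulVec_eq_zero_iff.mpr hroot
  rw [Matrix.sub_mulVec, sub_eq_zero] at hyl
  refine isIntegral_of_walkMatrix_mulVec hdeg hper hy ?_
  rw [← hyl]
  ext a
  simp [Matrix.scalar_apply, Matrix.mulVec_diagonal]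

end Periodic

section Height

lemma dist_parent_unique {T : SimpleGraph V} (hT : T.IsTree) {r a b b' : V} (hb : T.Adj a b)
    (hb' : T.Adj a b') (hd : T.dist r a = T.dist r b + 1) (hd' : T.dist r a = T.dist r b' + 1) :
    b = b' := by
  obtain ⟨p, hp⟩ := hT.connected.exists_walk_length_eq_dist r a
  have hpp := p.isPath_of_length_eq_dist hp
  have key : ∀ x, T.Adj a x → T.dist r a = T.dist r x + 1 → x = p.penultimate := by
    intro x hx hdx
    obtain ⟨q, hq⟩ := hT.connected.exists_walk_length_eq_dist r x
    refine hT.isAcyclic.eq_penultimate_of_adj_end hpp hx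
      (hT.isAcyclic.mem_support_of_ne_mem_support_of_adj_of_isPath hpp
        (q.isPath_of_length_eq_dist hq) hx fun hmem => ?_)
    have h1 := T.dist_le (q.takeUntil a hmem)
    have h2 := q.length_takeUntil_le_length hmem
    omega
  rw [key b hb hd, key b' hb' hd']

/-- Deleting a cycle edge `s(u, x)` from a unicyclic graph leaves a tree; the distance to `u` in
this tree is a height function. -/
lemma exists_height [Finite V] {G : SimpleGraph V} (hconn : G.Connected)
    (hcard : Nat.card G.edgeSet = Nat.card V) {u x : V} (hux : G.Adj u x)
    (hbr : ¬ G.IsBridge s(u, x)) :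
    ∃ δ : V → ℕ, δ u = 0 ∧
      (∀ a b, G.Adj a b → s(a, b) ≠ s(u, x) → δ a = δ b + 1 ∨ δ b = δ a + 1) ∧
      (∀ a b b', G.Adj a b → G.Adj a b' → s(a, b) ≠ s(u, x) → s(a, b') ≠ s(u, x) →
        δ a = δ b + 1 → δ a = δ b' + 1 → b = b') := by
  set T := G.deleteEdges {s(u, x)} with hTdef
  have hT : T.IsTree := by
    rw [SimpleGraph.isTree_iff_connected_and_card]
    refine ⟨hconn.connected_delete_edge_of_not_isBridge hbr, ?_⟩
    rw [hTdef, SimpleGraph.edgeSet_deleteEdges, ← hcard]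
    have hmem : s(u, x) ∈ G.edgeSet := hux
    have := Set.ncard_sdiff_singleton_add_one hmem (Set.toFinite _)
    rwa [← Nat.card_coe_set_eq, ← Nat.card_coe_set_eq] at this
  have hadj : ∀ {a b}, G.Adj a b → s(a, b) ≠ s(u, x) → T.Adj a b := by
    intro a b h h'
    rw [hTdef, SimpleGraph.deleteEdges_adj]
    exact ⟨h, h'⟩
  refine ⟨T.dist u, SimpleGraph.dist_self, fun a b h h' => ?_, fun a b b' h h' hs hs' hd hd' => ?_⟩
  · exact hT.dist_eq_dist_add_one_of_adj u (hadj h h')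
  · exact dist_parent_unique hT (hadj h hs) (hadj h' hs') hd hd'

lemma not_isBridge_of_cycle {G : SimpleGraph V} {k : ℕ} (hk : 3 ≤ k) {c : ZMod k → V}
    (hc : Function.Injective c) (hadj : ∀ i, G.Adj (c i) (c (i + 1))) :
    ¬ G.IsBridge s(c 0, c (-1)) := by
  rw [SimpleGraph.isBridge_iff, not_not]
  have hreach : ∀ j : ℕ, j < k → (G.deleteEdges {s(c 0, c (-1))}).Reachable (c 0) (c j) := by
    intro j
    induction j with
    | zero => intro _; simp
    | succ j ih =>
      intro hj
      refine (ih (by omega)).trans (SimpleGraph.Adj.reachable ?_)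
      rw [SimpleGraph.deleteEdges_adj]
      refine ⟨by simpa using hadj j, ?_⟩
      have h1 : ((j + 1 : ℕ) : ZMod k) ≠ 0 := by
        rw [Ne, ZMod.natCast_eq_zero_iff]
        exact fun h => absurd (Nat.le_of_dvd (by omega) h) (by omega)
      rw [Set.mem_singleton_iff, Sym2.eq_iff]
      rintro (⟨ha, hb⟩ | ⟨-, hb⟩)
      · have ha := hc ha
        have hb := hc hb
        have : ((2 : ℕ) : ZMod k) = 0 := by
          push_cast at hb ⊢
          rw [ha] at hb
          linear_combination hb
        rw [ZMod.natCast_eq_zero_iff] at this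
        exact absurd (Nat.le_of_dvd (by omega) this) (by omega)
      · exact h1 (hc hb)
  have h := hreach (k - 1) (by omega)
  rwa [Nat.cast_sub (by omega), ZMod.natCast_self, Nat.cast_one, zero_sub] at h

end Height

section Hitting

variable [Fintype V]

lemma neighborFinset_eq_pair {G : SimpleGraph V} {a b b' : V} (hb : G.Adj a b) (hb' : G.Adj a b')
    (hne : b ≠ b') (hdeg : G.degree a = 2) : G.neighborFinset a = {b, b'} := by
  symm
  refine Finset.eq_of_subset_of_card_le (fun x hx => ?_) ?_
  · simp only [Finset.mem_insert, Finset.mem_singleton] at hx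
    rcases hx with rfl | rfl <;> simpa
  · rw [SimpleGraph.card_neighborFinset_eq_degree, hdeg, Finset.card_pair hne]

lemma hit_succ {G : SimpleGraph V} {u a : V} (ha : a ≠ u) (m : ℕ) :
    hit (walkMatrix G) u (m + 1) a =
      2 / (G.degree a : ℂ) * ∑ b ∈ G.neighborFinset a, hit (walkMatrix G) u m b := by
  simp only [hit, if_neg ha, walkMatrix_sum]

lemma hit_succ_of_degree_eq_two {G : SimpleGraph V} {u a b b' : V} (ha : a ≠ u) (hb : G.Adj a b)
    (hb' : G.Adj a b') (hne : b ≠ b') (hdeg : G.degree a = 2) (m : ℕ) :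
    hit (walkMatrix G) u (m + 1) a =
      hit (walkMatrix G) u m b + hit (walkMatrix G) u m b' := by
  rw [hit_succ ha, neighborFinset_eq_pair hb hb' hne hdeg, Finset.sum_pair hne, hdeg]
  norm_num

lemma hit_self {R : Type*} [CommRing R] (M : Matrix V V R) (u : V) (m : ℕ) :
    hit M u m u = if m = 0 then 1 else 0 := by
  cases m <;> simp [hit]

/-- A cycle `c` of length `k` all of whose vertices but `c 0` have degree two, in a graph with a
height function `δ` that makes the rest of the graph a forest hanging off `c 0`. -/
structure IsPendantCycle (G : SimpleGraph V) (k : ℕ) (c : ZMod k → V) (δ : V → ℕ) : Prop where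
  three_le : 3 ≤ k
  injective : Function.Injective c
  adj : ∀ i, G.Adj (c i) (c (i + 1))
  degree_eq : ∀ i, i ≠ 0 → G.degree (c i) = 2
  height_zero : δ (c 0) = 0
  height_adj : ∀ a b, a ≠ c 0 → b ≠ c 0 → G.Adj a b → δ a = δ b + 1 ∨ δ b = δ a + 1
  height_adj_off : ∀ a b, a ∉ Set.range c → G.Adj a b → δ a = δ b + 1 ∨ δ b = δ a + 1
  height_parent : ∀ a b b', a ∉ Set.range c → G.Adj a b → G.Adj a b' → δ a = δ b + 1 →
    δ a = δ b' + 1 → b = b'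

namespace IsPendantCycle

variable {G : SimpleGraph V} {k : ℕ} {c : ZMod k → V} {δ : V → ℕ}

lemma adj_sub_one (h : IsPendantCycle G k c δ) (i : ZMod k) : G.Adj (c i) (c (i - 1)) := by
  simpa using (h.adj (i - 1)).symm

lemma natCast_ne_zero (_ : IsPendantCycle G k c δ) {j : ℕ} (hj : 0 < j) (hjk : j < k) :
    (j : ZMod k) ≠ 0 := by
  rw [Ne, ZMod.natCast_eq_zero_iff]
  exact fun hd => absurd (Nat.le_of_dvd hj hd) (by omega)

lemma sub_one_ne_add_one (h : IsPendantCycle G k c δ) (i : ZMod k) : c (i - 1) ≠ c (i + 1) := by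
  intro he
  have he := h.injective he
  refine h.natCast_ne_zero (j := 2) (by omega) h.three_le ?_
  push_cast
  linear_combination -he

lemma hit_cycle_succ (h : IsPendantCycle G k c δ) {i : ZMod k} (hi : i ≠ 0) (m : ℕ) :
    hit (walkMatrix G) (c 0) (m + 1) (c i) =
      hit (walkMatrix G) (c 0) m (c (i - 1)) + hit (walkMatrix G) (c 0) m (c (i + 1)) :=
  hit_succ_of_degree_eq_two (h.injective.ne hi) (h.adj_sub_one i) (h.adj i)
    (h.sub_one_ne_add_one i) (h.degree_eq i hi) m

lemma exists_int_hit_cycle (h : IsPendantCycle G k c δ) (m : ℕ) (i : ZMod k) :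
    ∃ z : ℤ, hit (walkMatrix G) (c 0) m (c i) = z := by
  induction m generalizing i with
  | zero => exact ⟨if c i = c 0 then 1 else 0, by simp [hit]⟩
  | succ m ih =>
    by_cases hi : i = 0
    · subst hi; exact ⟨0, by simp [hit]⟩
    · obtain ⟨z, hz⟩ := ih (i - 1)
      obtain ⟨z', hz'⟩ := ih (i + 1)
      exact ⟨z + z', by rw [h.hit_cycle_succ hi, hz, hz']; push_cast; rfl⟩

lemma hit_cycle_neg (h : IsPendantCycle G k c δ) (m : ℕ) (i : ZMod k) :
    hit (walkMatrix G) (c 0) m (c (-i)) = hit (walkMatrix G) (c 0) m (c i) := by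
  induction m generalizing i with
  | zero => simp [hit, h.injective.eq_iff]
  | succ m ih =>
    by_cases hi : i = 0
    · subst hi; simp
    · rw [h.hit_cycle_succ hi, h.hit_cycle_succ (neg_ne_zero.mpr hi), ← ih (i - 1), ← ih (i + 1),
        add_comm]
      congr 3 <;> ring

lemma hit_cycle_of_odd (h : IsPendantCycle G k c δ) {m j : ℕ} (hj : 1 ≤ j) (hjk : j < k)
    (hodd : Odd (m + j)) (hle : m + j ≤ k) :
    hit (walkMatrix G) (c 0) m (c j) = if m + j = k then 1 else 0 := by
  induction m generalizing j with
  | zero =>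
    rw [if_neg (by omega)]
    exact if_neg (h.injective.ne (h.natCast_ne_zero hj hjk))
  | succ m ih =>
    have hleft : hit (walkMatrix G) (c 0) m (c ((j : ZMod k) - 1)) = 0 := by
      obtain ⟨i, rfl⟩ : ∃ i, j = i + 1 := ⟨j - 1, by omega⟩
      rw [Nat.cast_add, Nat.cast_one, add_sub_cancel_right]
      rcases Nat.eq_zero_or_pos i with rfl | hi
      · rw [Nat.cast_zero, hit_self, if_neg]
        rintro rfl
        exact absurd hodd (by decide)
      · rw [ih hi (by omega) (by
          rw [show m + 1 + (i + 1) = m + i + 2 by ring, Nat.odd_add] at hodd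
          exact hodd.mpr (by decide)) (by omega), if_neg (by omega)]
    rw [h.hit_cycle_succ (h.natCast_ne_zero hj hjk), hleft, zero_add, ← Nat.cast_succ]
    by_cases hj' : j + 1 < k
    · rw [ih (by omega) hj' (by rwa [show m + (j + 1) = m + 1 + j by ring]) (by omega)]
      simp only [show m + (j + 1) = m + 1 + j by ring]
    · have : j + 1 = k := by omega
      have hm : m = 0 := by omega
      rw [Nat.succ_eq_add_one, this, ZMod.natCast_self, hit_self, if_pos hm, if_pos (by omega)]

lemma off_or_eq_of_adj (h : IsPendantCycle G k c δ) {a b : V} (ha : a ∉ Set.range c)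
    (hab : G.Adj a b) : b ∉ Set.range c ∨ b = c 0 := by
  by_contra! hb
  obtain ⟨⟨i, rfl⟩, hi⟩ := hb
  have hi : i ≠ 0 := fun hi0 => hi (by rw [hi0])
  have hmem : a ∈ G.neighborFinset (c i) := by simpa using hab.symm
  rw [neighborFinset_eq_pair (h.adj_sub_one i) (h.adj i) (h.sub_one_ne_add_one i)
    (h.degree_eq i hi)] at hmem
  simp only [Finset.mem_insert, Finset.mem_singleton] at hmem
  rcases hmem with rfl | rfl <;> exact ha ⟨_, rfl⟩

lemma exists_eq_of_hit_ne_zero (h : IsPendantCycle G k c δ) {m : ℕ} {a : V}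
    (ha : a ∉ Set.range c) (hne : hit (walkMatrix G) (c 0) m a ≠ 0) : ∃ r, m = δ a + 2 * r := by
  have hau : ∀ {a}, a ∉ Set.range c → a ≠ c 0 := by
    rintro a ha rfl; exact ha ⟨0, rfl⟩
  induction m generalizing a with
  | zero => simp [hit, hau ha] at hne
  | succ m ih =>
    rw [hit_succ (hau ha)] at hne
    obtain ⟨b, hb, hbne⟩ := Finset.exists_ne_zero_of_sum_ne_zero (right_ne_zero_of_mul hne)
    have hab : G.Adj a b := by simpa using hb
    have hδ := h.height_adj_off a b ha hab
    rcases h.off_or_eq_of_adj ha hab with hoff | rfl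
    · obtain ⟨r, hr⟩ := ih hoff hbne
      rcases hδ with hδ | hδ
      · exact ⟨r, by omega⟩
      · exact ⟨r + 1, by omega⟩
    · rw [hit_self] at hbne
      rw [h.height_zero] at hδ
      have : m = 0 := by by_contra hm; simp [hm] at hbne
      exact ⟨0, by omega⟩

end IsPendantCycle

/-- The number of `m`-step walks on the half line from `s` that reach `0` only in the last step. -/
def halfLineHit : ℕ → ℕ → ℤ
  | 0, s => if s = 0 then 1 else 0
  | _ + 1, 0 => 0
  | m + 1, s + 1 => halfLineHit m s + halfLineHit m (s + 2)

lemma halfLineHit_of_le {m s : ℕ} (h : m ≤ s) : halfLineHit m s = if m = s then 1 else 0 := by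
  induction m generalizing s with
  | zero => simp [halfLineHit, eq_comm]
  | succ m ih =>
    obtain ⟨s, rfl⟩ : ∃ r, s = r + 1 := ⟨s - 1, by omega⟩
    rw [halfLineHit, ih (by omega), ih (by omega), if_neg (show ¬ m = s + 2 by omega)]
    simp

namespace IsPendantCycle

variable {G : SimpleGraph V} {k : ℕ} {c : ZMod k → V} {δ : V → ℕ}

lemma branch_height (h : IsPendantCycle G k c δ) {t : ℕ} {v : ℕ → V} (hv0 : v 0 = c 0)
    (hvadj : ∀ s : ℕ, s < t + 1 → G.Adj (v s) (v (s + 1))) (hv1 : v 1 ∉ Set.range c)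
    (hvnb : ∀ s : ℕ, s + 2 ≤ t + 1 → v (s + 2) ≠ v s) {s : ℕ} (hs : s ≤ t) :
    v (s + 1) ∉ Set.range c ∧ δ (v s) = s ∧ δ (v (s + 1)) = s + 1 := by
  induction s with
  | zero =>
    have h0 : δ (v 0) = 0 := hv0 ▸ h.height_zero
    have := h.height_adj_off _ _ hv1 (hvadj 0 (by omega)).symm
    exact ⟨hv1, h0, by rw [zero_add]; omega⟩
  | succ s ih =>
    obtain ⟨hoff, h1, h2⟩ := ih (by omega)
    have hadj := hvadj (s + 1) (by omega)
    have h3 : δ (v (s + 1 + 1)) = s + 1 + 1 := by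
      rcases h.height_adj_off _ _ hoff hadj with hδ | hδ
      · exact absurd (h.height_parent _ _ _ hoff hadj (hvadj s (by omega)).symm hδ (by omega))
          (hvnb s (by omega))
      · omega
    refine ⟨(h.off_or_eq_of_adj hoff hadj).resolve_right fun he => ?_, h2, h3⟩
    rw [he, h.height_zero] at h3
    omega

lemma hit_branch (h : IsPendantCycle G k c δ) {t : ℕ} (ht : 1 ≤ t) {v : ℕ → V} (hv0 : v 0 = c 0)
    (hvadj : ∀ s : ℕ, s < t + 1 → G.Adj (v s) (v (s + 1))) (hv1 : v 1 ∉ Set.range c)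
    (hvnb : ∀ s : ℕ, s + 2 ≤ t + 1 → v (s + 2) ≠ v s)
    (hvdeg : ∀ s : ℕ, 1 ≤ s → s ≤ t → G.degree (v s) = 2) {m s : ℕ} (hs : s ≤ t + 1)
    (hms : m + s ≤ 2 * t + 2) (hm : m < 2 * t + 2) :
    hit (walkMatrix G) (c 0) m (v s) = halfLineHit m s +
      if m + s = 2 * t + 2 then 2 / (G.degree (v (t + 1)) : ℂ) - 1 else 0 := by
  have hoff : ∀ s, 1 ≤ s → s ≤ t + 1 → v s ∉ Set.range c ∧ δ (v s) = s := by
    intro s h1 h2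
    obtain ⟨s, rfl⟩ : ∃ r, s = r + 1 := ⟨s - 1, by omega⟩
    have := h.branch_height hv0 hvadj hv1 hvnb (s := s) (by omega)
    exact ⟨this.1, this.2.2⟩
  have hne : ∀ a, a ∉ Set.range c → a ≠ c 0 := by
    rintro a ha rfl; exact ha ⟨0, rfl⟩
  induction m generalizing s with
  | zero =>
    rw [if_neg (by omega)]
    rcases Nat.eq_zero_or_pos s with rfl | hs0
    · simp [hit, hv0, halfLineHit]
    · simp [hit, hne _ (hoff s hs0 hs).1, halfLineHit, hs0.ne']
  | succ m ih =>
    rcases Nat.eq_zero_or_pos s with rfl | hs0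
    · rw [if_neg (by omega), hv0, hit_self]
      simp [halfLineHit]
    obtain ⟨s, rfl⟩ : ∃ r, s = r + 1 := ⟨s - 1, by omega⟩
    have hadj := (hvadj s (by omega)).symm
    obtain ⟨hso, hsδ⟩ := hoff (s + 1) (by omega) hs
    rcases Nat.lt_or_ge s t with hst | hst
    · rw [hit_succ_of_degree_eq_two (hne _ hso) hadj (hvadj (s + 1) (by omega))
        (hvnb s (by omega)).symm (hvdeg _ (by omega) (by omega)), ih (by omega) (by omega) (by omega),
        ih (by omega) (by omega) (by omega), if_neg (show ¬ m + s = 2 * t + 2 by omega), halfLineHit]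
      simp only [show m + (s + 1 + 1) = m + 1 + (s + 1) by ring, show s + 1 + 1 = s + 2 by ring]
      push_cast
      ring
    · obtain rfl : s = t := by omega
      rw [halfLineHit_of_le (by omega)]
      by_cases hm' : m = s
      · subst hm'
        rw [if_pos rfl, if_pos (by omega), hit_succ (hne _ hso),
          Finset.sum_eq_single_of_mem (v m) (by simpa using hadj), ih (by omega) (by omega) (by omega),
          halfLineHit_of_le le_rfl, if_pos rfl, if_neg (by omega)]
        · push_cast; ring
        · intro b hb hbne
          by_contra hb0
          have hab : G.Adj (v (m + 1)) b := by simpa using hb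
          have hbδ : δ b = m + 2 := by
            rcases h.height_adj_off _ _ hso hab with hδ | hδ
            · exact absurd (h.height_parent _ _ _ hso hab hadj hδ
                (by rw [hsδ, (hoff m ht (by omega)).2])) hbne
            · omega
          have hbo := (h.off_or_eq_of_adj hso hab).resolve_right fun he => by
            rw [he, h.height_zero] at hbδ; omega
          obtain ⟨r, hr⟩ := h.exists_eq_of_hit_ne_zero hbo hb0
          omega
      · rw [if_neg (by omega), if_neg (by omega)]
        by_contra hb0
        obtain ⟨r, hr⟩ := h.exists_eq_of_hit_ne_zero hso (m := m + 1) (fun he => hb0 (by simp [he]))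
        omega

end IsPendantCycle

end Hitting

lemma eq_and_le_two_of_isIntegral_inv_add_inv {a b : ℕ} (ha : 0 < a) (hb : 0 < b)
    (h : IsIntegral ℤ ((a : ℂ)⁻¹ + (b : ℂ)⁻¹)) : a = b ∧ (a = 1 ∨ a = 2) := by
  have hcast : ((a : ℂ)⁻¹ + (b : ℂ)⁻¹) = algebraMap ℚ ℂ ((a : ℚ)⁻¹ + (b : ℚ)⁻¹) := by simp
  rw [hcast, isIntegral_algebraMap_iff (algebraMap ℚ ℂ).injective,
    IsIntegrallyClosed.isIntegral_iff] at h
  obtain ⟨z, hz⟩ := h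
  have ha' : (0 : ℚ) < a := by exact_mod_cast ha
  have hb' : (0 : ℚ) < b := by exact_mod_cast hb
  have hz' : (z : ℚ) * (a * b) = a + b := by
    have : (z : ℚ) = (a : ℚ)⁻¹ + (b : ℚ)⁻¹ := by simpa using hz
    rw [this]
    field_simp
    ring
  have hz' : z * (a * b) = a + b := by exact_mod_cast hz'
  have hzpos : 0 < z := by
    by_contra! hneg
    have : (0 : ℤ) < a * b := by positivity
    nlinarith
  have hab : (a : ℤ) ∣ b := (Int.dvd_add_right (dvd_refl (a : ℤ))).mp ⟨z * b, by rw [← hz']; ring⟩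
  have hba : (b : ℤ) ∣ a := (Int.dvd_add_left (dvd_refl (b : ℤ))).mp ⟨z * a, by rw [← hz']; ring⟩
  obtain rfl : a = b := Nat.dvd_antisymm (Int.natCast_dvd_natCast.mp hab)
    (Int.natCast_dvd_natCast.mp hba)
  refine ⟨rfl, (Nat.dvd_prime Nat.prime_two).mp (Int.natCast_dvd_natCast.mp ⟨z, ?_⟩)⟩
  have : (a : ℤ) ≠ 0 := by exact_mod_cast ha.ne'
  apply mul_left_cancel₀ this
  push_cast
  linear_combination -hz'

section FirstReturn

variable [Fintype V] {G : SimpleGraph V} {k : ℕ} {c : ZMod k → V} {δ : V → ℕ}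

namespace IsPendantCycle

lemma firstReturn_succ (h : IsPendantCycle G k c δ) (hdeg : G.degree (c 0) = 4) {v w : V}
    (hv : G.Adj (c 0) v) (hw : G.Adj (c 0) w) (hvc : v ∉ Set.range c) (hwc : w ∉ Set.range c)
    (hvw : v ≠ w) (m : ℕ) :
    firstReturn (walkMatrix G) (c 0) (m + 1) = hit (walkMatrix G) (c 0) m (c 1) +
      (hit (walkMatrix G) (c 0) m v + hit (walkMatrix G) (c 0) m w) / 2 := by
  have h1 : G.Adj (c 0) (c 1) := by simpa using h.adj 0
  have h2 : G.Adj (c 0) (c (-1)) := by simpa using h.adj_sub_one 0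
  have hne : c 1 ≠ c (-1) := by simpa using (h.sub_one_ne_add_one 0).symm
  have hv' : ∀ i, c i ≠ v := fun i hi => hvc ⟨i, hi⟩
  have hw' : ∀ i, c i ≠ w := fun i hi => hwc ⟨i, hi⟩
  have hN : G.neighborFinset (c 0) = {c 1, c (-1), v, w} := by
    symm
    refine Finset.eq_of_subset_of_card_le (fun x hx => ?_) ?_
    · simp only [Finset.mem_insert, Finset.mem_singleton] at hx
      rcases hx with rfl | rfl | rfl | rfl <;> simpa
    · rw [SimpleGraph.card_neighborFinset_eq_degree, hdeg,
        Finset.card_insert_of_notMem (by simp [hne, hv', hw']),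
        Finset.card_insert_of_notMem (by simp [hv', hw']), Finset.card_pair hvw]
  rw [firstReturn, walkMatrix_sum, hdeg, hN, Finset.sum_insert (by simp [hne, hv', hw']),
    Finset.sum_insert (by simp [hv', hw']), Finset.sum_pair hvw, h.hit_cycle_neg]
  push_cast
  ring

lemma firstReturn_of_odd (h : IsPendantCycle G k c δ) (hdeg : G.degree (c 0) = 4) {v w : V}
    (hv : G.Adj (c 0) v) (hw : G.Adj (c 0) w) (hvc : v ∉ Set.range c) (hwc : w ∉ Set.range c)
    (hvw : v ≠ w) {n : ℕ} (hn : Odd n) :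
    firstReturn (walkMatrix G) (c 0) n = hit (walkMatrix G) (c 0) (n - 1) (c 1) := by
  obtain ⟨r, rfl⟩ := hn
  have hzero : ∀ x, G.Adj (c 0) x → x ∉ Set.range c → hit (walkMatrix G) (c 0) (2 * r) x = 0 := by
    intro x hx hxc
    by_contra hne
    obtain ⟨q, hq⟩ := h.exists_eq_of_hit_ne_zero hxc hne
    have := h.height_adj_off x _ hxc hx.symm
    rw [h.height_zero] at this
    omega
  rw [h.firstReturn_succ hdeg hv hw hvc hwc hvw, hzero v hv hvc, hzero w hw hwc]
  simp

lemma isIntegral_firstReturn (h : IsPendantCycle G k c δ) (hk : Odd k)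
    (hdegpos : ∀ a, ∃ b, G.Adj a b) (hper : IsPeriodic G) (hdeg : G.degree (c 0) = 4) {v w : V}
    (hv : G.Adj (c 0) v) (hw : G.Adj (c 0) w) (hvc : v ∉ Set.range c) (hwc : w ∉ Set.range c)
    (hvw : v ≠ w) (n : ℕ) : IsIntegral ℤ (firstReturn (walkMatrix G) (c 0) n) := by
  have hk3 := h.three_le
  have hcycle : ∀ {n}, Odd n → n ≤ k →
      firstReturn (walkMatrix G) (c 0) n = if n = k then 1 else 0 := by
    intro n hn hnk
    rw [h.firstReturn_of_odd hdeg hv hw hvc hwc hvw hn]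
    have hpos := hn.pos
    have := h.hit_cycle_of_odd (m := n - 1) (j := 1) le_rfl (by omega)
      (by rwa [Nat.sub_add_cancel hpos]) (by omega)
    rwa [Nat.cast_one, Nat.sub_add_cancel hpos] at this
  refine coeff_mem_of_eq_mul_one_sub (S := (integralClosure ℤ ℂ).toSubring) hk
    (det_oneSubX (walkMatrix G) (c 0)) (coeff_det_oneSubX_walkMatrix_mem hdegpos hper)
    (fun n hn => ?_) (coeff_zero_minorSeries _ _) (fun n hn => ?_)
    (fun n hn hlt => by rw [hcycle hn hlt.le, if_neg hlt.ne])
    (by rw [hcycle hk le_rfl, if_pos rfl]) n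
  · have hsq (m : ℕ) : (-1 : ℂ) ^ m * (-1) ^ m = 1 := by rw [← mul_pow]; simp
    have heven := evalNegHom_minorSeries (walkMatrix G) (c 0) (fun a => (-1) ^ δ a)
      (fun a => hsq (δ a)) (fun a b ha hb => by
        by_cases hab : G.Adj a b
        · rcases h.height_adj a b ha hb hab with hδ | hδ
          · rw [hδ, pow_succ]
            linear_combination (-walkMatrix G a b) * hsq (δ b)
          · rw [hδ, pow_succ]
            linear_combination (-walkMatrix G a b) * hsq (δ a)
        · simp [walkMatrix, hab])
    have := congrArg (PowerSeries.coeff n) heven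
    rw [PowerSeries.evalNegHom, PowerSeries.coeff_rescale, hn.neg_one_pow] at this
    linear_combination (-1 / 2 : ℂ) * this
  · obtain ⟨z, hz⟩ := h.exists_int_hit_cycle (n - 1) 1
    rw [h.firstReturn_of_odd hdeg hv hw hvc hwc hvw hn, hz]
    exact isIntegral_algebraMap (R := ℤ) (A := ℂ) (x := z)

end IsPendantCycle

end FirstReturn

/-- In the cycle-plus-tree setting, if `G` is periodic and
`deg v₁ = … = deg v_t = deg w₁ = … = deg w_t = 2`, then `deg v_(t+1) = deg w_(t+1)` and this
common degree is `1` or `2`. -/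
theorem degree_next {V : Type*} [Fintype V] [DecidableEq V] (G : SimpleGraph V)
    (hconn : G.Connected) (k : ℕ) [NeZero k] (hk3 : 3 ≤ k) (hkodd : Odd k)
    (c : ZMod k → V) (hcinj : Function.Injective c)
    (hcadj : ∀ i : ZMod k, G.Adj (c i) (c (i + 1)))
    (hcard : Fintype.card V = G.edgeFinset.card)
    (hdegu : G.degree (c 0) = 4) (hdegc : ∀ i : ZMod k, i ≠ 0 → G.degree (c i) = 2)
    (hper : IsPeriodic G)
    (t : ℕ) (ht : 1 ≤ t)
    (v w : ℕ → V) (hv0 : v 0 = c 0) (hw0 : w 0 = c 0)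
    (hvadj : ∀ s : ℕ, s < (t + 1) → G.Adj (v s) (v (s + 1)))
    (hwadj : ∀ s : ℕ, s < (t + 1) → G.Adj (w s) (w (s + 1)))
    (hv1 : v 1 ∉ Set.range c) (hw1 : w 1 ∉ Set.range c) (hvw : v 1 ≠ w 1)
    (hvnb : ∀ s : ℕ, s + 2 ≤ (t + 1) → v (s + 2) ≠ v s)
    (hwnb : ∀ s : ℕ, s + 2 ≤ (t + 1) → w (s + 2) ≠ w s)
    (hvdeg : ∀ s : ℕ, 1 ≤ s → s ≤ t → G.degree (v s) = 2)
    (hwdeg : ∀ s : ℕ, 1 ≤ s → s ≤ t → G.degree (w s) = 2) :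
    G.degree (v (t + 1)) = G.degree (w (t + 1)) ∧
      (G.degree (v (t + 1)) = 1 ∨ G.degree (v (t + 1)) = 2) := by
  obtain ⟨δ, hδ0, hδ1, hδ2⟩ := exists_height hconn
    (by rw [Nat.card_eq_fintype_card, Nat.card_eq_fintype_card, hcard]
        exact (SimpleGraph.edgeFinset_card ..).symm)
    (show G.Adj (c 0) (c (-1)) by simpa using (hcadj (-1)).symm)
    (not_isBridge_of_cycle hk3 hcinj hcadj)
  have hedge : ∀ {a b}, a ∉ Set.range c → s(a, b) ≠ s(c 0, c (-1)) := by
    intro a b ha he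
    rcases Sym2.eq_iff.mp he with ⟨rfl, -⟩ | ⟨rfl, -⟩ <;> exact ha ⟨_, rfl⟩
  have h : IsPendantCycle G k c δ :=
    { three_le := hk3
      injective := hcinj
      adj := hcadj
      degree_eq := hdegc
      height_zero := hδ0
      height_adj := fun a b ha hb hab => hδ1 a b hab fun he => by
        rcases Sym2.eq_iff.mp he with ⟨ha', -⟩ | ⟨-, hb'⟩
        exacts [ha ha', hb hb']
      height_adj_off := fun a b ha hab => hδ1 a b hab (hedge ha)
      height_parent := fun a b b' ha hab hab' =>
        hδ2 a b b' hab hab' (hedge ha) (hedge ha) }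
  have hv : G.Adj (c 0) (v 1) := hv0 ▸ hvadj 0 (by omega)
  have hw : G.Adj (c 0) (w 1) := hw0 ▸ hwadj 0 (by omega)
  have : Nontrivial V := ⟨c 0, v 1, hv.ne⟩
  have hdegpos : ∀ a, ∃ b, G.Adj a b := fun a => hconn.preconnected.exists_adj_of_nontrivial a
  have hint := h.isIntegral_firstReturn hkodd hdegpos hper hdegu hv hw hv1 hw1 hvw (2 * t + 1 + 1)
  obtain ⟨z, hz⟩ := h.exists_int_hit_cycle (2 * t + 1) 1
  rw [h.firstReturn_succ hdegu hv hw hv1 hw1 hvw, hz,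
    h.hit_branch ht hv0 hvadj hv1 hvnb hvdeg (by omega) (by omega) (by omega),
    h.hit_branch ht hw0 hwadj hw1 hwnb hwdeg (by omega) (by omega) (by omega), if_pos rfl] at hint
  refine eq_and_le_two_of_isIntegral_inv_add_inv
    (hvadj t (by omega)).degree_pos_right (hwadj t (by omega)).degree_pos_right ?_
  have hint' := hint.sub (isIntegral_algebraMap (R := ℤ) (A := ℂ)
    (x := z + halfLineHit (2 * t + 1) 1 - 1))
  refine (congrArg (IsIntegral ℤ) ?_).mp hint'
  rw [if_pos rfl, algebraMap_int_eq, eq_intCast]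
  push_cast
  ring

end GroverPaper
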